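/- Let d ≠ 0, 1 be a squarefree integer, let K = ℚ(√d), and let α = (a + b√d)/2 be an element of the ring of integers O_K (with a, b ∈ ℤ) whose norm N_{K/ℚ}(α) equals c³ for some integer c. Then the cubic polynomial X³ − 3cX − a is reducible over ℚ if and only if α is a cube in K, i.e., if and only if there exists β ∈ K with β³ = α. -/

import Mathlib

open Polynomial

/-!
Let `K / F` be a quadratic extension, with trace `T` and norm `N`. Every `β : K` satisfies
`β ^ 2 - T β * β + N β = 0`, and hence `T (β ^ 3) = (T β) ^ 3 - 3 * N β * T β`. If `α = β ^ 3` has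
norm `c ^ 3`, then `N β` is `c` up to a cube root of unity in `F`, by which `β` can be rescaled
so that `N β = c`, and `T β` is then a root of `X ^ 3 - 3 * c * X - T α`.

Conversely, a root `r` should be the trace of a cube root `β` of `α` with norm `c`. The relation
`β ^ 2 = r * β - c` turns `β ^ 3 = α` into the linear equation `(r ^ 2 - c) * β = α + r * c`,
whose solution is indeed a cube root of `α`. When `r ^ 2 = c` the quadratic equation of `α` reads
`(α + r ^ 3) ^ 2 = 0`, so that `α = (-r) ^ 3`.
-/

theorem not_irreducible_iff_exists_isRoot_of_natDegree_le_three {F : Type*} [Field F] {p : F[X]}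
    (hp2 : 2 ≤ p.natDegree) (hp3 : p.natDegree ≤ 3) : ¬ Irreducible p ↔ ∃ r, p.IsRoot r := by
  have hp0 : p ≠ 0 := ne_zero_of_natDegree_gt hp2
  rw [irreducible_iff_roots_eq_zero_of_degree_le_three hp2 hp3,
    Multiset.eq_zero_iff_forall_notMem, not_forall_not]
  simp only [mem_roots hp0]

theorem exists_pow_three_eq_of_trinomial_root {K : Type*} [Field K] {α a c r : K}
    (hα : α ^ 2 - a * α + c ^ 3 = 0) (hr : r ^ 3 - 3 * c * r - a = 0) :
    ∃ β, β ^ 3 = α := by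
  obtain rfl : a = r ^ 3 - 3 * c * r := by linear_combination -hr
  by_cases hrc : r ^ 2 = c
  · subst hrc
    have hsq : (α + r ^ 3) ^ 2 = 0 := by linear_combination hα
    have hα_eq : α + r ^ 3 = 0 := sq_eq_zero_iff.mp hsq
    exact ⟨-r, by linear_combination -hα_eq⟩
  · have hne : r ^ 2 - c ≠ 0 := sub_ne_zero.mpr hrc
    obtain ⟨β, hβ⟩ : ∃ β, (r ^ 2 - c) * β = α + r * c := ⟨_, mul_div_cancel₀ _ hne⟩
    have hquad : β ^ 2 - r * β + c = 0 := by
      refine (mul_eq_zero.mp ?_).resolve_left (pow_ne_zero 2 hne)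
      linear_combination hα + ((r ^ 2 - c) * β + α + r * c - r * (r ^ 2 - c)) * hβ
    exact ⟨β, by linear_combination (β + r) * hquad + hβ⟩

section QuadraticAlgebra

variable {R S : Type*} [CommRing R] [Nontrivial R] [CommRing S] [Algebra R S]
  [Algebra.IsQuadraticExtension R S]

theorem sq_sub_trace_mul_add_norm_eq_zero (x : S) :
    x ^ 2 - algebraMap R S (Algebra.trace R S x) * x + algebraMap R S (Algebra.norm R x) = 0 := by
  let B : Module.Basis (Fin 2) R S :=
    Module.finBasisOfFinrankEq R S (Algebra.IsQuadraticExtension.finrank_eq_two R S)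
  have hcharpoly : (Algebra.lmul R S x).charpoly =
      X ^ 2 - C (Algebra.trace R S x) * X + C (Algebra.norm R x) := by
    rw [← LinearMap.charpoly_toMatrix _ B, Matrix.charpoly_fin_two, LinearMap.det_toMatrix,
      ← LinearMap.trace_eq_matrix_trace, Algebra.trace_apply, Algebra.norm_apply]
  have hcayley := Algebra.aeval_self_charpoly_lmul (R := R) x
  rw [hcharpoly] at hcayley
  simpa using hcayley

theorem trace_pow_three (x : S) :
    Algebra.trace R S (x ^ 3) =
      Algebra.trace R S x ^ 3 - 3 * Algebra.norm R x * Algebra.trace R S x := by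
  set t := Algebra.trace R S x with ht
  set n := Algebra.norm R x
  have hx : x ^ 2 - algebraMap R S t * x + algebraMap R S n = 0 :=
    sq_sub_trace_mul_add_norm_eq_zero x
  have hsq : x ^ 2 = t • x - algebraMap R S n := by
    rw [Algebra.smul_def]
    linear_combination hx
  have hcube : x ^ 3 = t • x ^ 2 - n • x := by
    simp only [Algebra.smul_def]
    linear_combination x * hx
  have htrace_sq : Algebra.trace R S (x ^ 2) = t ^ 2 - 2 * n := by
    rw [hsq, map_sub, map_smul, Algebra.trace_algebraMap,
      Algebra.IsQuadraticExtension.finrank_eq_two, ← ht, smul_eq_mul, nsmul_eq_mul]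
    ring
  rw [hcube, map_sub, map_smul, map_smul, htrace_sq, ← ht, smul_eq_mul, smul_eq_mul]
  ring

end QuadraticAlgebra

section QuadraticExtension

variable {F K : Type*} [Field F] [Field K] [Algebra F K] [Algebra.IsQuadraticExtension F K]

theorem exists_pow_three_eq_and_norm_eq {β : K} {c : F} (hβ : Algebra.norm F β ^ 3 = c ^ 3) :
    ∃ γ : K, γ ^ 3 = β ^ 3 ∧ Algebra.norm F γ = c := by
  rcases eq_or_ne c 0 with rfl | hc
  · exact ⟨β, rfl, by simpa using hβ⟩
  · set ζ : F := Algebra.norm F β / c with hζ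
    have hζ_cube : ζ ^ 3 = 1 := by rw [hζ, div_pow, hβ, div_self (pow_ne_zero 3 hc)]
    have hnorm : Algebra.norm F β = ζ * c := (div_mul_cancel₀ _ hc).symm
    refine ⟨algebraMap F K ζ * β, ?_, ?_⟩
    · rw [mul_pow, ← map_pow, hζ_cube, map_one, one_mul]
    · rw [map_mul, Algebra.norm_algebraMap, Algebra.IsQuadraticExtension.finrank_eq_two, hnorm]
      linear_combination c * hζ_cube

theorem trace_eq_zero_of_sq_eq_algebraMap {s : K} {e : F} (hs : s ^ 2 = algebraMap F K e)
    (he : ¬ IsSquare e) : Algebra.trace F K s = 0 := by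
  set t := Algebra.trace F K s
  by_contra ht
  obtain ⟨q, rfl⟩ : ∃ q, algebraMap F K q = s := by
    refine ⟨(e + Algebra.norm F s) / t, ?_⟩
    rw [map_div₀, div_eq_iff (by simpa using ht), map_add]
    linear_combination sq_sub_trace_mul_add_norm_eq_zero (R := F) s - hs
  rw [← map_pow] at hs
  exact he ⟨q, by rw [← sq, (algebraMap F K).injective hs]⟩

theorem trace_add_mul_div_two (h2 : (2 : F) ≠ 0) {s : K} (hs : Algebra.trace F K s = 0)
    (a b : F) : Algebra.trace F K ((algebraMap F K a + algebraMap F K b * s) / 2) = a := by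
  have hsplit : (algebraMap F K a + algebraMap F K b * s) / 2 =
      algebraMap F K (a / 2) + (b / 2) • s := by
    rw [Algebra.smul_def, map_div₀, map_div₀, map_ofNat]
    ring
  rw [hsplit, map_add, map_smul, hs, smul_zero, add_zero, Algebra.trace_algebraMap,
    Algebra.IsQuadraticExtension.finrank_eq_two, nsmul_eq_mul, Nat.cast_ofNat,
    mul_div_cancel₀ a h2]

theorem kishi_trinomial_reducible_iff_cube_general {α : K} {c : F}
    (hnorm : Algebra.norm F α = c ^ 3) :
    ¬ Irreducible (X ^ 3 - C (3 * c) * X - C (Algebra.trace F K α)) ↔ ∃ β : K, β ^ 3 = α := by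
  have hdeg : (X ^ 3 - C (3 * c) * X - C (Algebra.trace F K α)).natDegree = 3 := by
    compute_degree!
  rw [not_irreducible_iff_exists_isRoot_of_natDegree_le_three (by lia) hdeg.le]
  simp only [IsRoot.def, eval_sub, eval_mul, eval_pow, eval_X, eval_C]
  constructor
  · rintro ⟨r, hr⟩
    have hα := sq_sub_trace_mul_add_norm_eq_zero (R := F) α
    rw [hnorm, map_pow] at hα
    refine exists_pow_three_eq_of_trinomial_root (r := algebraMap F K r) hα ?_
    simpa only [map_sub, map_mul, map_pow, map_ofNat, map_zero] using congrArg (algebraMap F K) hr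
  · rintro ⟨β, rfl⟩
    rw [map_pow] at hnorm
    obtain ⟨γ, hγ, rfl⟩ := exists_pow_three_eq_and_norm_eq hnorm
    exact ⟨Algebra.trace F K γ, by rw [← hγ, trace_pow_three, sub_self]⟩

end QuadraticExtension

theorem not_isSquare_intCast_rat_of_squarefree {d : ℤ} (hsf : Squarefree d) (hd : d ≠ 1) :
    ¬ IsSquare (d : ℚ) := by
  rw [Rat.isSquare_intCast_iff]
  rintro ⟨m, rfl⟩
  exact hd (Int.isUnit_mul_self (hsf m dvd_rfl))

/-- Kishi's lemma: let `d ≠ 0, 1` be squarefree, `K = ℚ(√d)`, and let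
`α = (a + b√d)/2` be an algebraic integer of `K` whose norm is `c ^ 3`.  Then the Kishi
trinomial `X ^ 3 - 3c X - a` is reducible over `ℚ` if and only if `α` is a cube in `K`. -/
theorem kishi_trinomial_reducible_iff_cube
    (d : ℤ) (hd0 : d ≠ 0) (hd1 : d ≠ 1) (hsf : Squarefree d)
    (K : Type*) [Field K] [NumberField K] (hdeg : Module.finrank ℚ K = 2)
    (sqd : K) (hsqd : sqd ^ 2 = (d : K))
    (a b : ℤ) (α : K) (hα : α = ((a : K) + (b : K) * sqd) / 2)
    (hint : IsIntegral ℤ α) (c : ℤ) (hnorm : Algebra.norm ℚ α = (c : ℚ) ^ 3) :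
    ¬ Irreducible (X ^ 3 - C (3 * (c : ℚ)) * X - C (a : ℚ)) ↔ ∃ β : K, β ^ 3 = α := by
  have : Algebra.IsQuadraticExtension ℚ K := ⟨hdeg⟩
  have htrace_sqd : Algebra.trace ℚ K sqd = 0 :=
    trace_eq_zero_of_sq_eq_algebraMap (by simpa using hsqd)
      (not_isSquare_intCast_rat_of_squarefree hsf hd1)
  have htrace : Algebra.trace ℚ K α = a := by
    simpa [hα] using trace_add_mul_div_two two_ne_zero htrace_sqd (a : ℚ) b
  simpa only [htrace] using kishi_trinomial_reducible_iff_cube_general hnorm
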